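/- Let L_R, D_R, U_R, U′_R, D′_R, L′_R be the (n+1)×(n+1) matrices with entries l^R_{ij} = C_{t^{-1}}(n−j,n−i) (−1)^{i−j} t^{−C(i−j,2)} (a₂b₂t^j;t)_{i−j} / (a₁^{-1}a₂t^{−(n−2j−1)};t)_{i−j} (i ≥ j, else 0), d^R_j = (a₁a₂^{-1}t^{−j};t)_{n−j}(a₂b₁;t)_j / ((a₁b₂;t)_{n−j}(a₁^{-1}a₂t^{−(n−j)};t)_j), u^R_{ij} = C_{t^{-1}}(j,i) (a₁b₁t^{n−j};t)_{j−i} / (a₁a₂^{-1}t^{n−i−j};t)_{j−i} (i ≤ j, else 0), u′^R_{ij} = C_t(j,i) (−1)^{j−i} t^{C(j−i,2)} (a₁^{-1}b₁^{-1}t^{−(n−i−1)};t)_{j−i} / (b₁^{-1}b₂t^{i+j−n};t)_{j−i} (i ≤ j, else 0), d′^R_j = (b₁b₂^{-1}t^{n−2j+1};t)_j (a₂^{-1}b₁^{-1}t^{−(n−j−1)};t)_{n−j} / ((a₁^{-1}b₂^{-1}t^{−(j−1)};t)_j (b₁^{-1}b₂t^{−(n−2j−1)};t)_{n−j}), l′^R_{ij}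 = C_t(n−j,n−i) (a₂^{-1}b₂^{-1}t^{−(i−1)};t)_{i−j} / (b₁b₂^{-1}t^{n−2i+1};t)_{i−j} (i ≥ j, else 0). Then L_R D_R U_R = U′_R D′_R L′_R as matrices over the field of rational functions in a₁, a₂, b₁, b₂, t. -/

import Mathlib

open scoped BigOperators

/-- The c-shifted factorial (x;c)_k = (1−x)(1−cx)⋯(1−c^{k−1}x). -/
noncomputable def qPoch (x c : ℂ) (k : ℕ) : ℂ :=
  ∏ i ∈ Finset.range k, (1 - c ^ i * x)

/-- The c-binomial coefficient, zero when k > m. -/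
noncomputable def qBinom (c : ℂ) (m k : ℕ) : ℂ :=
  if k ≤ m then qPoch c c m / (qPoch c c (m - k) * qPoch c c k) else 0

noncomputable def matLR (n : ℕ) (a₁ a₂ b₁ b₂ t : ℂ) :
    Matrix (Fin (n + 1)) (Fin (n + 1)) ℂ :=
  Matrix.of fun i j =>
    if (j : ℕ) ≤ (i : ℕ) then
      qBinom t⁻¹ (n - (j : ℕ)) (n - (i : ℕ)) * (-1 : ℂ) ^ ((i : ℕ) - (j : ℕ)) *
        (t⁻¹) ^ (((i : ℕ) - (j : ℕ)) * (((i : ℕ) - (j : ℕ)) - 1) / 2) *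
        (qPoch (a₂ * b₂ * t ^ (j : ℕ)) t ((i : ℕ) - (j : ℕ)) /
          qPoch (a₁⁻¹ * a₂ * t ^ (-((n : ℤ) - 2 * (j : ℕ) - 1))) t ((i : ℕ) - (j : ℕ)))
    else 0

noncomputable def matDR (n : ℕ) (a₁ a₂ b₁ b₂ t : ℂ) :
    Matrix (Fin (n + 1)) (Fin (n + 1)) ℂ :=
  Matrix.diagonal fun j =>
    qPoch (a₁ * a₂⁻¹ * (t⁻¹) ^ (j : ℕ)) t (n - (j : ℕ)) * qPoch (a₂ * b₁) t (j : ℕ) /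
      (qPoch (a₁ * b₂) t (n - (j : ℕ)) *
        qPoch (a₁⁻¹ * a₂ * t ^ (-((n : ℤ) - (j : ℕ)))) t (j : ℕ))

noncomputable def matUR (n : ℕ) (a₁ a₂ b₁ b₂ t : ℂ) :
    Matrix (Fin (n + 1)) (Fin (n + 1)) ℂ :=
  Matrix.of fun i j =>
    if (i : ℕ) ≤ (j : ℕ) then
      qBinom t⁻¹ (j : ℕ) (i : ℕ) *
        (qPoch (a₁ * b₁ * t ^ (n - (j : ℕ))) t ((j : ℕ) - (i : ℕ)) /
          qPoch (a₁ * a₂⁻¹ * t ^ ((n : ℤ) - (i : ℕ) - (j : ℕ))) t ((j : ℕ) - (i : ℕ)))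
    else 0

noncomputable def matUR' (n : ℕ) (a₁ a₂ b₁ b₂ t : ℂ) :
    Matrix (Fin (n + 1)) (Fin (n + 1)) ℂ :=
  Matrix.of fun i j =>
    if (i : ℕ) ≤ (j : ℕ) then
      qBinom t (j : ℕ) (i : ℕ) * (-1 : ℂ) ^ ((j : ℕ) - (i : ℕ)) *
        t ^ (((j : ℕ) - (i : ℕ)) * (((j : ℕ) - (i : ℕ)) - 1) / 2) *
        (qPoch (a₁⁻¹ * b₁⁻¹ * (t⁻¹) ^ (n - (i : ℕ) - 1)) t ((j : ℕ) - (i : ℕ)) /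
          qPoch (b₁⁻¹ * b₂ * t ^ ((i : ℤ) + (j : ℕ) - n)) t ((j : ℕ) - (i : ℕ)))
    else 0

noncomputable def matDR' (n : ℕ) (a₁ a₂ b₁ b₂ t : ℂ) :
    Matrix (Fin (n + 1)) (Fin (n + 1)) ℂ :=
  Matrix.diagonal fun j =>
    qPoch (b₁ * b₂⁻¹ * t ^ ((n : ℤ) - 2 * (j : ℕ) + 1)) t (j : ℕ) *
        qPoch (a₂⁻¹ * b₁⁻¹ * (t⁻¹) ^ (n - (j : ℕ) - 1)) t (n - (j : ℕ)) /
      (qPoch (a₁⁻¹ * b₂⁻¹ * (t⁻¹) ^ ((j : ℕ) - 1)) t (j : ℕ) *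
        qPoch (b₁⁻¹ * b₂ * t ^ (-((n : ℤ) - 2 * (j : ℕ) - 1))) t (n - (j : ℕ)))

noncomputable def matLR' (n : ℕ) (a₁ a₂ b₁ b₂ t : ℂ) :
    Matrix (Fin (n + 1)) (Fin (n + 1)) ℂ :=
  Matrix.of fun i j =>
    if (j : ℕ) ≤ (i : ℕ) then
      qBinom t (n - (j : ℕ)) (n - (i : ℕ)) *
        (qPoch (a₂⁻¹ * b₂⁻¹ * (t⁻¹) ^ ((i : ℕ) - 1)) t ((i : ℕ) - (j : ℕ)) /
          qPoch (b₁ * b₂⁻¹ * t ^ ((n : ℤ) - 2 * (i : ℕ) + 1)) t ((i : ℕ) - (j : ℕ)))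
    else 0


theorem qPoch_zero (x c : ℂ) : qPoch x c 0 = 1 := by simp [qPoch]

theorem qPoch_succ (x c : ℂ) (k : ℕ) :
    qPoch x c (k + 1) = qPoch x c k * (1 - c ^ k * x) := by
  simp [qPoch, Finset.prod_range_succ]

theorem qPoch_succ' (x c : ℂ) (k : ℕ) :
    qPoch x c (k + 1) = (1 - x) * qPoch (c * x) c k := by
  simp only [qPoch, Finset.prod_range_succ', pow_zero, one_mul]
  rw [mul_comm]
  congr 1
  exact Finset.prod_congr rfl fun i _ => by ring

theorem qPoch_add (x c : ℂ) (k l : ℕ) :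
    qPoch x c (k + l) = qPoch x c k * qPoch (c ^ k * x) c l := by
  simp only [qPoch, Finset.prod_range_add]
  congr 1
  exact Finset.prod_congr rfl fun i _ => by ring

theorem qPoch_ne_zero {x c : ℂ} {k : ℕ} (h : ∀ i < k, c ^ i * x ≠ 1) : qPoch x c k ≠ 0 :=
  Finset.prod_ne_zero_iff.2 fun i hi =>
    sub_ne_zero.2 (h i (Finset.mem_range.1 hi)).symm

theorem qPoch_inv {c : ℂ} (hc : c ≠ 0) (x : ℂ) (k : ℕ) :
    qPoch x c⁻¹ k = qPoch (x * c ^ (1 - (k : ℤ))) c k := by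
  simp only [qPoch]
  rw [← Finset.prod_range_reflect]
  refine Finset.prod_congr rfl fun i hi => ?_
  have hi := Finset.mem_range.1 hi
  obtain ⟨l, rfl⟩ : ∃ l, k = i + l + 1 := ⟨k - i - 1, by omega⟩
  rw [show i + l + 1 - 1 - i = l by omega, ← zpow_natCast, ← zpow_natCast, inv_zpow',
    mul_left_comm, ← zpow_add₀ hc, mul_comm]
  congr 3
  push_cast
  ring

theorem prod_sub_pow {c : ℂ} (hc : c ≠ 0) (x : ℂ) (k : ℕ) :
    ∏ i ∈ Finset.range k, (x - c ^ i) =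
      (-1) ^ k * c ^ (k * (k - 1) / 2) * qPoch x c⁻¹ k := by
  induction k with
  | zero => simp [qPoch]
  | succ k ih =>
    rw [Finset.prod_range_succ, ih, qPoch_succ, ← Nat.choose_two_right, ← Nat.choose_two_right,
      Nat.choose_succ_succ' k 1, Nat.choose_one_right, pow_add, pow_succ (-1 : ℂ)]
    rw [inv_pow]
    field_simp
    ring

theorem qPoch_self_ne_zero {c : ℂ} (hroot : ∀ m : ℕ, m ≠ 0 → c ^ m ≠ 1) (k : ℕ) :
    qPoch c c k ≠ 0 :=
  qPoch_ne_zero fun i _ => by rw [← pow_succ]; exact hroot _ i.succ_ne_zero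

theorem qBinom_of_lt (c : ℂ) {m k : ℕ} (h : m < k) : qBinom c m k = 0 :=
  if_neg (by omega)

theorem qBinom_add (c : ℂ) (m k : ℕ) :
    qBinom c (k + m) k = qPoch c c (k + m) / (qPoch c c m * qPoch c c k) := by
  simp [qBinom]

theorem qBinom_zero_right {c : ℂ} (hroot : ∀ m : ℕ, m ≠ 0 → c ^ m ≠ 1) (m : ℕ) :
    qBinom c m 0 = 1 := by
  simp [qBinom, qPoch_zero, div_self (qPoch_self_ne_zero hroot m)]

theorem qBinom_self {c : ℂ} (hroot : ∀ m : ℕ, m ≠ 0 → c ^ m ≠ 1) (m : ℕ) :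
    qBinom c m m = 1 := by
  simp [qBinom, qPoch_zero, div_self (qPoch_self_ne_zero hroot m)]

theorem qBinom_symm (c : ℂ) {m k : ℕ} (h : k ≤ m) : qBinom c m (m - k) = qBinom c m k := by
  simp only [qBinom, Nat.sub_le, h, if_true, Nat.sub_sub_self h]
  rw [mul_comm]

/-- The two Pascal rules combined: an identity affine in `x`. -/
theorem qBinom_pascal {c : ℂ} (hroot : ∀ m : ℕ, m ≠ 0 → c ^ m ≠ 1) (x : ℂ) {N m : ℕ}
    (hm : m ≤ N) :
    qBinom c (N + 1) (m + 1) * (1 - x) =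
      qBinom c N m * (c ^ (N - m) - x) + qBinom c N (m + 1) * (1 - c ^ (m + 1) * x) := by
  obtain rfl | hlt := hm.eq_or_lt
  · rw [qBinom_self hroot, qBinom_self hroot, qBinom_of_lt c (Nat.lt_succ_self m)]
    simp
  · obtain ⟨k, rfl⟩ : ∃ k, N = m + 1 + k := ⟨N - m - 1, by omega⟩
    have h1 := qPoch_self_ne_zero hroot m
    have h2 := qPoch_self_ne_zero hroot k
    have h3 : (1 : ℂ) - c ^ m * c ≠ 0 :=
      sub_ne_zero.2 (by rw [← pow_succ]; exact (hroot _ m.succ_ne_zero).symm)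
    have h4 : (1 : ℂ) - c ^ k * c ≠ 0 :=
      sub_ne_zero.2 (by rw [← pow_succ]; exact (hroot _ k.succ_ne_zero).symm)
    have e1 := qBinom_add c (k + 1) m
    have e2 := qBinom_add c (k + 1) (m + 1)
    have e3 := qBinom_add c k (m + 1)
    rw [show m + (k + 1) = m + 1 + k by omega] at e1
    rw [show m + 1 + k + 1 = m + 1 + (k + 1) by omega, e1, e2, e3,
      show m + 1 + k - m = k + 1 by omega, show m + 1 + (k + 1) = m + 1 + k + 1 by omega,
      qPoch_succ _ _ (m + 1 + k), qPoch_succ _ _ k, qPoch_succ _ _ m]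
    simp only [pow_add, pow_one] at h3 h4 ⊢
    generalize c ^ m = X at *
    generalize c ^ k = Y at *
    rw [mul_comm Y] at h4
    field_simp
    ring

theorem sum_range_regroup {N : ℕ} {A B T : ℕ → ℂ} (h0 : T 0 = B 0)
    (h1 : ∀ m < N, T (m + 1) = A m + B (m + 1)) (h2 : T (N + 1) = A N) :
    ∑ m ∈ Finset.range (N + 2), T m = ∑ m ∈ Finset.range (N + 1), (A m + B m) := by
  rw [Finset.sum_range_succ', Finset.sum_range_succ, h0, h2,
    Finset.sum_congr rfl fun m hm => h1 m (Finset.mem_range.1 hm), Finset.sum_add_distrib,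
    Finset.sum_add_distrib, Finset.sum_range_succ A, Finset.sum_range_succ' B]
  ring

/-- Expansion of `(w;c)_N` in the products `(wr;c)_m (wpc^m;c)_{N-m}`. -/
theorem sum_qBinom_mixed {c : ℂ} (hroot : ∀ m : ℕ, m ≠ 0 → c ^ m ≠ 1) (w r : ℂ) (N : ℕ) :
    ∀ p : ℂ, ∑ m ∈ Finset.range (N + 1), qBinom c N m * qPoch p c m *
        (∏ k ∈ Finset.range (N - m), (r - c ^ k)) *
        (qPoch (w * r) c m * qPoch (w * p * c ^ m) c (N - m)) =
      (∏ k ∈ Finset.range N, (r - p * c ^ k)) * qPoch w c N := by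
  induction N with
  | zero => intro p; simp [qPoch_zero, qBinom]
  | succ N ih =>
    intro p
    set S : ℕ → ℂ := fun m => (∏ k ∈ Finset.range (N - m), (r - c ^ k)) *
        (qPoch (w * r) c m * qPoch (w * (c * p) * c ^ m) c (N - m)) with hS
    have hsum : (∏ k ∈ Finset.range (N + 1), (r - p * c ^ k)) * qPoch w c (N + 1) =
        ∑ m ∈ Finset.range (N + 1),
          (qBinom c N m * qPoch (c * p) c m * S m * ((c ^ (N - m) - p) * (1 - c ^ m * (w * r))) +
           qBinom c N m * qPoch (c * p) c m * S m *
            ((r - c ^ (N - m)) * (1 - w * p * c ^ m))) := by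
      have := ih (c * p)
      rw [Finset.prod_range_succ', qPoch_succ]
      rw [show ∏ k ∈ Finset.range N, (r - p * c ^ (k + 1)) =
        ∏ k ∈ Finset.range N, (r - c * p * c ^ k) from
          Finset.prod_congr rfl fun i _ => by ring]
      rw [show ∀ a b d e : ℂ, a * b * (d * e) = a * d * (b * e) from fun _ _ _ _ => by ring,
        ← this, Finset.sum_mul]
      refine Finset.sum_congr rfl fun m hm => ?_
      have hm : m ≤ N := Nat.lt_succ_iff.1 (Finset.mem_range.1 hm)
      rw [hS]
      have : c ^ N = c ^ (N - m) * c ^ m := by rw [← pow_add]; congr 1; omega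
      rw [this]
      ring
    rw [hsum]
    apply sum_range_regroup
    · simp only [hS, qBinom_zero_right hroot, qPoch_zero, Nat.sub_zero, pow_zero,
        Finset.prod_range_succ, qPoch_succ' _ _ N]
      ring_nf
    · intro m hm
      obtain ⟨k, rfl⟩ : ∃ k, N = m + 1 + k := ⟨N - m - 1, by omega⟩
      have hp := qBinom_pascal hroot p (show m ≤ m + 1 + k by omega)
      simp only [hS]
      rw [show m + 1 + k + 1 - (m + 1) = k + 1 by omega, show m + 1 + k - m = k + 1 by omega,
        show m + 1 + k - (m + 1) = k by omega] at *
      rw [qPoch_succ' p, qPoch_succ (w * r), qPoch_succ (c * p),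
        qPoch_succ' (w * p * c ^ (m + 1)), Finset.prod_range_succ,
        show w * (c * p) * c ^ m = w * p * c ^ (m + 1) by ring,
        qPoch_succ' (w * p * c ^ (m + 1)),
        show w * (c * p) * c ^ (m + 1) = c * (w * p * c ^ (m + 1)) by ring]
      linear_combination (qPoch (c * p) c m * ((∏ k ∈ Finset.range k, (r - c ^ k)) * (r - c ^ k)) *
        (qPoch (w * r) c m * (1 - c ^ m * (w * r)) * ((1 - w * p * c ^ (m + 1)) *
          qPoch (c * (w * p * c ^ (m + 1))) c k))) * hp
    · simp only [hS, qBinom_self hroot, Nat.sub_self, qPoch_zero, Finset.prod_range_zero,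
        qPoch_succ (w * r), qPoch_succ' p, pow_zero]
      ring

theorem inv_pow_ne_one {c : ℂ} (hroot : ∀ m : ℕ, m ≠ 0 → c ^ m ≠ 1) (m : ℕ) (hm : m ≠ 0) :
    c⁻¹ ^ m ≠ 1 := by
  rw [inv_pow, Ne, inv_eq_one]
  exact hroot m hm

theorem connection_coeff_succ {c : ℂ} (hc : c ≠ 0) (hroot : ∀ m : ℕ, m ≠ 0 → c ^ m ≠ 1) {ρ : ℂ}
    (hρ0 : ρ ≠ 0) (hρ : ∀ m : ℤ, c ^ m * ρ ≠ 1) (m k : ℕ) :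
    qBinom c⁻¹ (m + 1 + k + 1) (m + 1) /
        (qPoch (ρ * c ^ (-(k : ℤ) - 1)) c (m + 1) * qPoch (ρ⁻¹ * c ^ (-(m : ℤ) - 1)) c (k + 1)) =
      qBinom c⁻¹ (m + 1 + k) m /
        (qPoch (ρ * c ^ (-(k : ℤ) - 1)) c (m + 1) * qPoch (ρ⁻¹ * c ^ (-(m : ℤ))) c (k + 1)) +
      qBinom c⁻¹ (m + 1 + k) (m + 1) /
        (qPoch (ρ * c ^ (-(k : ℤ))) c (m + 1) * qPoch (ρ⁻¹ * c ^ (-(m : ℤ) - 1)) c (k + 1)) := by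
  have key := qBinom_pascal (inv_pow_ne_one hroot) (c ^ ((m : ℤ) - k) * ρ)
    (show m ≤ m + 1 + k by omega)
  have e1 : c * (ρ * c ^ (-(k : ℤ) - 1)) = ρ * c ^ (-(k : ℤ)) := by
    rw [zpow_sub_one₀ hc]; field_simp
  have e2 : c * (ρ⁻¹ * c ^ (-(m : ℤ) - 1)) = ρ⁻¹ * c ^ (-(m : ℤ)) := by
    rw [zpow_sub_one₀ hc]; field_simp
  have hP : qPoch (ρ * c ^ (-(k : ℤ))) c m ≠ 0 := qPoch_ne_zero fun i _ => by
    rw [← zpow_natCast, mul_left_comm, ← zpow_add₀ hc, mul_comm]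
    exact hρ _
  have hQ : qPoch (ρ⁻¹ * c ^ (-(m : ℤ))) c k ≠ 0 := qPoch_ne_zero fun i _ => by
    rw [← zpow_natCast, mul_left_comm, ← zpow_add₀ hc, Ne, ← inv_eq_one, mul_inv, inv_inv,
      ← zpow_neg, mul_comm]
    exact hρ _
  have f1 := hρ (-(k : ℤ) - 1)
  have f2 := hρ ((m : ℤ) + 1)
  have f3 := hρ ((m : ℤ) - k)
  rw [qPoch_succ' (ρ * c ^ (-(k : ℤ) - 1)), qPoch_succ' (ρ⁻¹ * c ^ (-(m : ℤ) - 1)), e1, e2,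
    qPoch_succ, qPoch_succ]
  rw [show m + 1 + k - m = k + 1 by omega] at key
  simp only [zpow_sub₀ hc, zpow_add₀ hc, zpow_neg, zpow_natCast, zpow_one, inv_pow, pow_succ]
    at f1 f2 f3 hP hQ key ⊢
  have hX : c ^ m ≠ 0 := pow_ne_zero _ hc
  have hY : c ^ k ≠ 0 := pow_ne_zero _ hc
  generalize c ^ m = X at *
  generalize c ^ k = Y at *
  have g1 : Y * c - ρ ≠ 0 := fun h => f1 (by rw [← sub_eq_zero.1 h]; field_simp)
  have g2 : X * c * ρ - 1 ≠ 0 := sub_ne_zero.2 f2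
  have g3 : Y - X * ρ ≠ 0 := fun h => f3 (by field_simp; linear_combination -h)
  generalize qPoch (ρ * Y⁻¹) c m = P at *
  generalize qPoch (ρ⁻¹ * X⁻¹) c k = Q at *
  have r1 : 1 - ρ * (Y⁻¹ / c) = (Y * c - ρ) / (Y * c) := by field_simp
  have r2 : 1 - ρ⁻¹ * (X⁻¹ / c) = (X * c * ρ - 1) / (X * c * ρ) := by field_simp
  have r3 : 1 - X * (ρ * Y⁻¹) = (Y - X * ρ) / Y := by field_simp
  have r4 : 1 - Y * (ρ⁻¹ * X⁻¹) = - (Y - X * ρ) / (X * ρ) := by field_simp; ring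
  rw [r1, r2, r3, r4]
  generalize qBinom c⁻¹ (m + 1 + k + 1) (m + 1) = B at *
  generalize qBinom c⁻¹ (m + 1 + k) (m + 1) = B₁ at *
  generalize qBinom c⁻¹ (m + 1 + k) m = B₂ at *
  generalize hA : Y * c - ρ = A at *
  generalize hD : X * c * ρ - 1 = D at *
  generalize hG : Y - X * ρ = G at *
  field_simp at key ⊢
  rw [← hG, ← hA, ← hD]
  linear_combination key

/-- Expansion of `(ω;c)_N` in the products `(u;c)_m (v;c)_{N-m}`. -/
theorem sum_qBinom_parallel {c : ℂ} (hc : c ≠ 0) (hroot : ∀ m : ℕ, m ≠ 0 → c ^ m ≠ 1) {u v : ℂ}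
    (hu : u ≠ 0) (hv : v ≠ 0) (huv : ∀ m : ℤ, c ^ m * (u / v) ≠ 1) (ω : ℂ) (N : ℕ) :
    ∑ m ∈ Finset.range (N + 1), qBinom c⁻¹ N m /
        (qPoch (u / v * c ^ ((m : ℤ) - N)) c m * qPoch (v / u * c ^ (-(m : ℤ))) c (N - m)) *
        ((qPoch (ω / v) c m * qPoch (ω / u) c (N - m)) * (qPoch u c m * qPoch v c (N - m))) =
      qPoch ω c N := by
  induction N with
  | zero => simp [qPoch_zero, qBinom]
  | succ N ih =>
    have hroot' := inv_pow_ne_one hroot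
    set S : ℕ → ℂ := fun m =>
      (qPoch (ω / v) c m * qPoch (ω / u) c (N - m)) * (qPoch u c m * qPoch v c (N - m)) with hS
    have hsum : qPoch ω c (N + 1) = ∑ m ∈ Finset.range (N + 1),
        (qBinom c⁻¹ N m / (qPoch (u / v * c ^ ((m : ℤ) - N)) c (m + 1) *
            qPoch (v / u * c ^ (-(m : ℤ))) c (N - m)) * S m *
            ((1 - c ^ m * (ω / v)) * (1 - c ^ m * u)) +
         qBinom c⁻¹ N m / (qPoch (u / v * c ^ ((m : ℤ) - N)) c m *
            qPoch (v / u * c ^ (-(m : ℤ))) c (N - m + 1)) * S m *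
            ((1 - c ^ (N - m) * (ω / u)) * (1 - c ^ (N - m) * v))) := by
      rw [qPoch_succ, ← ih, Finset.sum_mul]
      refine Finset.sum_congr rfl fun m hm => ?_
      obtain ⟨k, rfl⟩ : ∃ k, N = m + k :=
        ⟨N - m, by have := Finset.mem_range.1 hm; omega⟩
      have f := huv ((m : ℤ) - k)
      simp only [Nat.add_sub_cancel_left, hS, qPoch_succ]
      rw [show ((m : ℤ) - ((m + k : ℕ) : ℤ)) = -k by push_cast; ring]
      simp only [zpow_sub₀ hc, zpow_neg, zpow_natCast, pow_add] at f ⊢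
      have hX : c ^ m ≠ 0 := pow_ne_zero _ hc
      have hY : c ^ k ≠ 0 := pow_ne_zero _ hc
      generalize c ^ m = X at *
      generalize c ^ k = Y at *
      have g : v * Y - X * u ≠ 0 := fun h => f (by field_simp; linear_combination -h)
      have r1 : 1 - X * (u / v * Y⁻¹) = (v * Y - X * u) / (v * Y) := by field_simp
      have r2 : 1 - Y * (v / u * X⁻¹) = - (v * Y - X * u) / (u * X) := by field_simp; ring
      rw [r1, r2]
      generalize hG : v * Y - X * u = G at *
      generalize qPoch (u / v * Y⁻¹) c m = P
      generalize qPoch (v / u * X⁻¹) c k = Q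
      simp only [div_eq_mul_inv, mul_inv]
      generalize P⁻¹ = P
      generalize Q⁻¹ = Q
      field_simp
      rw [← hG]
      ring
    rw [hsum]
    apply sum_range_regroup
    · simp [hS, qBinom_zero_right hroot', qPoch_zero, qPoch_succ _ _ N]
      ring_nf
    · intro m hm
      obtain ⟨k, rfl⟩ : ∃ k, N = m + 1 + k := ⟨N - m - 1, by omega⟩
      have key := connection_coeff_succ hc hroot (div_ne_zero hu hv) huv m k
      rw [inv_div] at key
      simp only [hS]
      rw [show m + 1 + k + 1 - (m + 1) = k + 1 by omega, show m + 1 + k - m = k + 1 by omega,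
        show m + 1 + k - (m + 1) = k by omega,
        show ((m + 1 : ℕ) : ℤ) - ((m + 1 + k + 1 : ℕ) : ℤ) = -k - 1 by push_cast; ring,
        show ((m + 1 : ℕ) : ℤ) - ((m + 1 + k : ℕ) : ℤ) = -k by push_cast; ring,
        show (m : ℤ) - ((m + 1 + k : ℕ) : ℤ) = -k - 1 by push_cast; ring,
        show -((m + 1 : ℕ) : ℤ) = -m - 1 by push_cast; ring, key]
      simp only [qPoch_succ (ω / v), qPoch_succ (ω / u), qPoch_succ u, qPoch_succ v]
      ring
    · simp only [hS, qBinom_self hroot', Nat.sub_self, qPoch_zero,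
        qPoch_succ u, qPoch_succ (ω / v),
        show ((N + 1 : ℕ) : ℤ) - ((N + 1 : ℕ) : ℤ) = N - N by push_cast; ring]
      ring

theorem qPoch_inv_pow {c : ℂ} (hc : c ≠ 0) (x : ℂ) (k : ℕ) :
    qPoch (x * c⁻¹ ^ (k - 1)) c k = qPoch x c⁻¹ k := by
  cases k with
  | zero => simp [qPoch_zero]
  | succ k =>
    rw [qPoch_inv hc, Nat.add_sub_cancel, inv_pow, ← zpow_natCast, ← zpow_neg]
    congr 3
    push_cast
    ring

theorem prod_sub_mul_qPoch {c p : ℂ} (hc : c ≠ 0) (hp : p ≠ 0) (r : ℂ) (N : ℕ) :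
    (∏ k ∈ Finset.range N, (r - p * c ^ k)) * qPoch p⁻¹ c⁻¹ N =
      qPoch p c N * qPoch (r / p) c⁻¹ N := by
  simp only [qPoch, ← Finset.prod_mul_distrib]
  refine Finset.prod_congr rfl fun k _ => ?_
  have := pow_ne_zero k hc
  rw [inv_pow]
  field_simp
  ring

theorem sum_fin_ite_le (n : ℕ) (j : Fin (n + 1)) (F : ℕ → ℂ) :
    ∑ i : Fin (n + 1), (if (i : ℕ) ≤ j then F i else 0) = ∑ i ∈ Finset.range ((j : ℕ) + 1), F i := by
  rw [Fin.sum_univ_eq_sum_range (fun i => if i ≤ (j : ℕ) then F i else 0), ← Finset.sum_filter]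
  refine Finset.sum_congr ?_ fun _ _ => rfl
  ext i
  simp only [Finset.mem_filter, Finset.mem_range]
  omega

theorem sum_fin_ite_ge (n : ℕ) (j : Fin (n + 1)) (F : ℕ → ℂ) :
    ∑ i : Fin (n + 1), (if (j : ℕ) ≤ i then F i else 0) =
      ∑ m ∈ Finset.range (n - j + 1), F (j + m) := by
  rw [Fin.sum_univ_eq_sum_range (fun i => if (j : ℕ) ≤ i then F i else 0)]
  obtain ⟨j, hj⟩ := j
  obtain ⟨N, rfl⟩ : ∃ N, n = j + N := ⟨n - j, by omega⟩
  simp only [Nat.add_sub_cancel_left]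
  refine (Finset.sum_range_add _ j (N + 1)).trans ?_
  rw [Finset.sum_eq_zero fun i hi => if_neg (by have := Finset.mem_range.1 hi; omega), zero_add]
  exact Finset.sum_congr rfl fun i _ => if_pos (by omega)

section Transitions

variable {n : ℕ} {a₁ a₂ b₁ b₂ t : ℂ}

/-- `L_R D_R` sends the basis `(x/a₁)_i (x b₂ t^i)_{n-i}` to multiples of `(x/a₁)_j (x/a₂)_{n-j}`. -/
theorem vecMul_matLR_matDR (ha₁ : a₁ ≠ 0) (ha₂ : a₂ ≠ 0) (ht : t ≠ 0)
    (hroot : ∀ m : ℕ, m ≠ 0 → t ^ m ≠ 1) (hA : ∀ m : ℤ, t ^ m * (a₁⁻¹ * a₂) ≠ 1)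
    (hB : ∀ m : ℤ, t ^ m * (a₁ * b₂) ≠ 1) (x : ℂ) :
    Matrix.vecMul (Matrix.vecMul (fun i : Fin (n + 1) => qPoch (x / a₁) t (i : ℕ) *
        qPoch (x * b₂ * t ^ (i : ℕ)) t (n - i)) (matLR n a₁ a₂ b₁ b₂ t)) (matDR n a₁ a₂ b₁ b₂ t) =
      fun j : Fin (n + 1) => qPoch (a₂ * b₁) t (j : ℕ) /
        qPoch (a₁⁻¹ * a₂ * t ^ (-((n : ℤ) - (j : ℕ)))) t (j : ℕ) *
        (qPoch (x / a₁) t (j : ℕ) * qPoch (x / a₂) t (n - j)) := by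
  funext j
  rw [matDR, Matrix.vecMul_diagonal]
  simp only [Matrix.vecMul, dotProduct, matLR, Matrix.of_apply, mul_ite, mul_zero]
  rw [sum_fin_ite_ge n j fun i => qPoch (x / a₁) t i * qPoch (x * b₂ * t ^ i) t (n - i) *
    (qBinom t⁻¹ (n - (j : ℕ)) (n - i) * (-1 : ℂ) ^ (i - (j : ℕ)) *
        (t⁻¹) ^ ((i - (j : ℕ)) * ((i - (j : ℕ)) - 1) / 2) *
        (qPoch (a₂ * b₂ * t ^ (j : ℕ)) t (i - (j : ℕ)) /
          qPoch (a₁⁻¹ * a₂ * t ^ (-((n : ℤ) - 2 * (j : ℕ) - 1))) t (i - (j : ℕ))))]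
  obtain ⟨j, hj⟩ := j
  obtain ⟨N, rfl⟩ : ∃ N, n = j + N := ⟨n - j, by omega⟩
  simp only [Nat.add_sub_cancel_left]
  have ht' := inv_ne_zero ht
  set p : ℂ := a₁⁻¹ * a₂ * t ^ j with hp
  set w : ℂ := x / a₂ * t ^ ((N : ℤ) - 1) with hw
  have hp0 : p ≠ 0 := mul_ne_zero (mul_ne_zero (inv_ne_zero ha₁) ha₂) (pow_ne_zero _ ht)
  have hpN : ∀ N, qPoch p t⁻¹ N ≠ 0 := fun N => qPoch_ne_zero fun i _ => by
    rw [hp, ← zpow_natCast t, inv_pow, ← zpow_natCast, ← zpow_neg, mul_comm (a₁⁻¹ * a₂),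
      ← mul_assoc, ← zpow_add₀ ht]
    exact hA _
  have hBN : qPoch (a₁ * b₂) t N ≠ 0 := qPoch_ne_zero fun i _ => by
    rw [← zpow_natCast]; exact hB _
  have main := sum_qBinom_mixed (inv_pow_ne_one hroot) w (a₂ * b₂ * t ^ j) N p
  rw [← Finset.sum_flip] at main
  have hsum : ∑ m ∈ Finset.range (N + 1), qPoch (x / a₁) t (j + m) *
      qPoch (x * b₂ * t ^ (j + m)) t (j + N - (j + m)) *
      (qBinom t⁻¹ N (j + N - (j + m)) * (-1 : ℂ) ^ m * (t⁻¹) ^ (m * (m - 1) / 2) *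
        (qPoch (a₂ * b₂ * t ^ j) t m /
          qPoch (a₁⁻¹ * a₂ * t ^ (-(((j + N : ℕ) : ℤ) - 2 * (j : ℕ) - 1))) t m)) =
      qPoch (x / a₁) t j / qPoch p t⁻¹ N *
        ((∏ k ∈ Finset.range N, (a₂ * b₂ * t ^ j - p * t⁻¹ ^ k)) * qPoch w t⁻¹ N) := by
    rw [← main, Finset.mul_sum]
    refine Finset.sum_congr rfl fun m hm => ?_
    obtain ⟨k, rfl⟩ : ∃ k, N = m + k :=
      ⟨N - m, by have := Finset.mem_range.1 hm; omega⟩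
    have e1 : qPoch (w * (a₂ * b₂ * t ^ j)) t⁻¹ k = qPoch (x * b₂ * t ^ (j + m)) t k := by
      rw [qPoch_inv ht, hw]
      congr 1
      push_cast
      simp only [zpow_sub₀ ht, zpow_add₀ ht, zpow_natCast, zpow_one, pow_add]
      field_simp
    have e2 : qPoch (w * p * t⁻¹ ^ k) t⁻¹ m = qPoch (t ^ j * (x / a₁)) t m := by
      rw [qPoch_inv ht, hw, hp]
      congr 1
      push_cast
      simp only [zpow_sub₀ ht, zpow_add₀ ht, zpow_natCast, zpow_one, inv_pow]
      field_simp
    have e3 : qPoch (t⁻¹ ^ k * p) t⁻¹ m =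
        qPoch (a₁⁻¹ * a₂ * t ^ (-(((j + (m + k) : ℕ) : ℤ) - 2 * (j : ℕ) - 1))) t m := by
      rw [qPoch_inv ht, hp]
      congr 1
      push_cast
      simp only [zpow_sub₀ ht, zpow_add₀ ht, zpow_neg, zpow_natCast, zpow_one, inv_pow, two_mul]
      field_simp
    have hk := hpN k
    have hm' : qPoch (t⁻¹ ^ k * p) t⁻¹ m ≠ 0 := fun h => hpN (k + m) (by rw [qPoch_add, h, mul_zero])
    rw [show j + (m + k) - (j + m) = k by omega, show m + k - m = k by omega,
      show m + k - k = m by omega, prod_sub_pow ht', inv_inv, e1, e2, ← e3, qPoch_add (x / a₁),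
      show qPoch p t⁻¹ (m + k) = qPoch p t⁻¹ k * qPoch (t⁻¹ ^ k * p) t⁻¹ m by
        rw [← qPoch_add, add_comm]]
    generalize qPoch p t⁻¹ k = P at hk ⊢
    generalize qPoch (t⁻¹ ^ k * p) t⁻¹ m = Q at hm' ⊢
    field_simp
  have hwN : qPoch w t⁻¹ N = qPoch (x / a₂) t N := by
    rw [qPoch_inv ht, hw, mul_assoc, ← zpow_add₀ ht]
    simp
  have hconst := prod_sub_mul_qPoch ht' hp0 (a₂ * b₂ * t ^ j) N
  rw [inv_inv, show a₂ * b₂ * t ^ j / p = a₁ * b₂ by rw [hp]; field_simp,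
    show p⁻¹ = a₁ * a₂⁻¹ * t⁻¹ ^ j by rw [hp, mul_inv, mul_inv, inv_inv, inv_pow]] at hconst
  rw [hsum, hwN]
  have := hpN N
  simp only [div_eq_mul_inv, mul_inv]
  generalize (qPoch (a₁⁻¹ * a₂ * t ^ (-(((j + N : ℕ) : ℤ) - (j : ℕ)))) t j)⁻¹ = Z
  generalize qPoch p t⁻¹ N = P at *
  generalize ∏ k ∈ Finset.range N, (a₂ * b₂ * t ^ j - p * t⁻¹ ^ k) = R at *
  generalize qPoch (a₁ * a₂⁻¹ * t⁻¹ ^ j) t N = V at *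
  field_simp
  linear_combination (qPoch (x / a₁) t j * qPoch (x / a₂) t N * qPoch (a₂ * b₁) t j * Z) * hconst

/-- `U_R` sends these multiples to `(x b₁ t^{n-j})_j (x/a₂)_{n-j}`. -/
theorem vecMul_matUR (ha₁ : a₁ ≠ 0) (ha₂ : a₂ ≠ 0) (ht : t ≠ 0)
    (hroot : ∀ m : ℕ, m ≠ 0 → t ^ m ≠ 1) (hA : ∀ m : ℤ, t ^ m * (a₁⁻¹ * a₂) ≠ 1)
    {x : ℂ} (hx : x ≠ 0) :
    Matrix.vecMul (fun j : Fin (n + 1) => qPoch (a₂ * b₁) t (j : ℕ) /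
        qPoch (a₁⁻¹ * a₂ * t ^ (-((n : ℤ) - (j : ℕ)))) t (j : ℕ) *
        (qPoch (x / a₁) t (j : ℕ) * qPoch (x / a₂) t (n - j))) (matUR n a₁ a₂ b₁ b₂ t) =
      fun j : Fin (n + 1) => qPoch (x * b₁ * t ^ (n - (j : ℕ))) t (j : ℕ) *
        qPoch (x / a₂) t (n - j) := by
  funext j
  simp only [Matrix.vecMul, dotProduct, matUR, Matrix.of_apply, mul_ite, mul_zero]
  rw [sum_fin_ite_le n j fun i => qPoch (a₂ * b₁) t i /
        qPoch (a₁⁻¹ * a₂ * t ^ (-((n : ℤ) - (i : ℕ)))) t i *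
        (qPoch (x / a₁) t i * qPoch (x / a₂) t (n - i)) * (qBinom t⁻¹ (j : ℕ) i *
        (qPoch (a₁ * b₁ * t ^ (n - (j : ℕ))) t ((j : ℕ) - i) /
          qPoch (a₁ * a₂⁻¹ * t ^ ((n : ℤ) - i - (j : ℕ))) t ((j : ℕ) - i)))]
  obtain ⟨j, hj⟩ := j
  obtain ⟨M, rfl⟩ : ∃ M, n = j + M := ⟨n - j, by omega⟩
  simp only [Nat.add_sub_cancel_left]
  have huv : x / a₁ / (x / a₂ * t ^ M) = a₁⁻¹ * a₂ * t ^ (-(M : ℤ)) := by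
    rw [zpow_neg, zpow_natCast]; field_simp
  have main := sum_qBinom_parallel ht hroot (u := x / a₁) (v := x / a₂ * t ^ M)
    (div_ne_zero hx ha₁) (mul_ne_zero (div_ne_zero hx ha₂) (pow_ne_zero _ ht))
    (fun m => by
      rw [huv, mul_comm (a₁⁻¹ * a₂), ← mul_assoc, ← zpow_add₀ ht]; exact hA _)
    (x * b₁ * t ^ M) j
  rw [← main, Finset.sum_mul]
  refine Finset.sum_congr rfl fun i hi => ?_
  obtain ⟨k, rfl⟩ : ∃ k, j = i + k :=
    ⟨j - i, by have := Finset.mem_range.1 hi; omega⟩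
  have e1 : x * b₁ * t ^ M / (x / a₂ * t ^ M) = a₂ * b₁ := by field_simp
  have e2 : x * b₁ * t ^ M / (x / a₁) = a₁ * b₁ * t ^ M := by field_simp
  have e3 : x / a₁ / (x / a₂ * t ^ M) * t ^ ((i : ℤ) - ((i + k : ℕ) : ℤ)) =
      a₁⁻¹ * a₂ * t ^ (-(((i + k + M : ℕ) : ℤ) - (i : ℕ))) := by
    push_cast
    simp only [zpow_sub₀ ht, zpow_add₀ ht, zpow_neg, zpow_natCast]
    field_simp
  have e4 : x / a₂ * t ^ M / (x / a₁) * t ^ (-(i : ℤ)) =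
      a₁ * a₂⁻¹ * t ^ (((i + k + M : ℕ) : ℤ) - i - ((i + k : ℕ) : ℤ)) := by
    push_cast
    simp only [zpow_sub₀ ht, zpow_add₀ ht, zpow_neg, zpow_natCast]
    field_simp
  rw [e1, e2, e3, e4, show i + k + M - i = M + k by omega, show i + k - i = k by omega,
    qPoch_add (x / a₂), mul_comm (t ^ M) (x / a₂)]
  simp only [div_eq_mul_inv, mul_inv]
  ring

/-- `U′_R D′_R` sends the basis `(x/a₁)_i (x b₂ t^i)_{n-i}` to multiples of
`(x b₁ t^{n-j})_j (x b₂ t^j)_{n-j}`. -/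
theorem vecMul_matUR'_matDR' (ha₁ : a₁ ≠ 0) (hb₁ : b₁ ≠ 0) (hb₂ : b₂ ≠ 0) (ht : t ≠ 0)
    (hroot : ∀ m : ℕ, m ≠ 0 → t ^ m ≠ 1) (hB : ∀ m : ℤ, t ^ m * (a₁ * b₂) ≠ 1)
    (hC : ∀ m : ℤ, t ^ m * (b₁⁻¹ * b₂) ≠ 1) (x : ℂ) :
    Matrix.vecMul (Matrix.vecMul (fun i : Fin (n + 1) => qPoch (x / a₁) t (i : ℕ) *
        qPoch (x * b₂ * t ^ (i : ℕ)) t (n - i)) (matUR' n a₁ a₂ b₁ b₂ t))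
        (matDR' n a₁ a₂ b₁ b₂ t) =
      fun j : Fin (n + 1) => qPoch (a₂⁻¹ * b₁⁻¹ * (t⁻¹) ^ (n - (j : ℕ) - 1)) t (n - (j : ℕ)) /
        qPoch (b₁⁻¹ * b₂ * t ^ (-((n : ℤ) - 2 * (j : ℕ) - 1))) t (n - (j : ℕ)) *
        (qPoch (x * b₁ * t ^ (n - (j : ℕ))) t (j : ℕ) *
          qPoch (x * b₂ * t ^ (j : ℕ)) t (n - j)) := by
  funext j
  rw [matDR', Matrix.vecMul_diagonal]
  simp only [Matrix.vecMul, dotProduct, matUR', Matrix.of_apply, mul_ite, mul_zero]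
  rw [sum_fin_ite_le n j fun i => qPoch (x / a₁) t i * qPoch (x * b₂ * t ^ i) t (n - i) *
    (qBinom t (j : ℕ) i * (-1 : ℂ) ^ ((j : ℕ) - i) *
        t ^ (((j : ℕ) - i) * (((j : ℕ) - i) - 1) / 2) *
        (qPoch (a₁⁻¹ * b₁⁻¹ * (t⁻¹) ^ (n - i - 1)) t ((j : ℕ) - i) /
          qPoch (b₁⁻¹ * b₂ * t ^ ((i : ℤ) + (j : ℕ) - n)) t ((j : ℕ) - i)))]
  obtain ⟨j, hj⟩ := j
  obtain ⟨M, rfl⟩ : ∃ M, n = j + M := ⟨n - j, by omega⟩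
  simp only [Nat.add_sub_cancel_left]
  set p : ℂ := b₁⁻¹ * b₂ * t⁻¹ ^ M with hp
  set r : ℂ := a₁⁻¹ * b₁⁻¹ * t⁻¹ ^ M with hr
  set w : ℂ := x * b₁ * t ^ M with hw
  have hp0 : p ≠ 0 :=
    mul_ne_zero (mul_ne_zero (inv_ne_zero hb₁) hb₂) (pow_ne_zero _ (inv_ne_zero ht))
  have hpN : ∀ N, qPoch p t N ≠ 0 := fun N => qPoch_ne_zero fun i _ => by
    rw [hp, ← zpow_natCast t, inv_pow, ← zpow_natCast, ← zpow_neg, mul_left_comm, ← zpow_add₀ ht,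
      mul_comm]
    exact hC _
  have hBN : qPoch (a₁⁻¹ * b₂⁻¹) t⁻¹ j ≠ 0 := qPoch_ne_zero fun i _ => by
    rw [← mul_inv, inv_pow, ← mul_inv, Ne, inv_eq_one, ← zpow_natCast]
    exact hB _
  have main := sum_qBinom_mixed hroot w r j p
  have hsum : ∑ i ∈ Finset.range (j + 1),
      qPoch (x / a₁) t i * qPoch (x * b₂ * t ^ i) t (j + M - i) *
      (qBinom t j i * (-1 : ℂ) ^ (j - i) * t ^ ((j - i) * ((j - i) - 1) / 2) *
        (qPoch (a₁⁻¹ * b₁⁻¹ * (t⁻¹) ^ (j + M - i - 1)) t (j - i) /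
          qPoch (b₁⁻¹ * b₂ * t ^ ((i : ℤ) + (j : ℕ) - ((j + M : ℕ) : ℤ))) t (j - i))) =
      qPoch (x * b₂ * t ^ j) t M / qPoch p t j *
        ((∏ k ∈ Finset.range j, (r - p * t ^ k)) * qPoch w t j) := by
    rw [← main, Finset.mul_sum]
    refine Finset.sum_congr rfl fun i hi => ?_
    obtain ⟨k, rfl⟩ : ∃ k, j = i + k :=
      ⟨j - i, by have := Finset.mem_range.1 hi; omega⟩
    have e1 : qPoch (a₁⁻¹ * b₁⁻¹ * (t⁻¹) ^ (i + k + M - i - 1)) t k = qPoch r t⁻¹ k := by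
      rw [← qPoch_inv_pow ht, hr]
      cases k with
      | zero => simp only [qPoch_zero]
      | succ k =>
        rw [mul_assoc (a₁⁻¹ * b₁⁻¹), ← pow_add]
        congr 3
        omega
    have e2 : w * r = x / a₁ := by rw [hw, hr, inv_pow]; field_simp
    have e3 : w * p * t ^ i = x * b₂ * t ^ i := by rw [hw, hp, inv_pow]; field_simp
    have e4 : b₁⁻¹ * b₂ * t ^ ((i : ℤ) + ((i + k : ℕ) : ℤ) - ((i + k + M : ℕ) : ℤ)) =
        t ^ i * p := by
      rw [hp]
      push_cast
      simp only [zpow_sub₀ ht, zpow_add₀ ht, zpow_natCast, inv_pow]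
      field_simp
    have hi' := hpN i
    have hk' : qPoch (t ^ i * p) t k ≠ 0 := fun h => hpN (i + k) (by rw [qPoch_add, h, mul_zero])
    rw [show i + k - i = k by omega, e1, e2, e3, e4, prod_sub_pow ht,
      show i + k + M - i = k + M by omega, qPoch_add (x * b₂ * t ^ i),
      show t ^ k * (x * b₂ * t ^ i) = x * b₂ * t ^ (i + k) by ring, qPoch_add p]
    field_simp
  have hconst := prod_sub_mul_qPoch ht hp0 r j
  have hpinv : qPoch p⁻¹ t⁻¹ j =
      qPoch (b₁ * b₂⁻¹ * t ^ (((j + M : ℕ) : ℤ) - 2 * (j : ℕ) + 1)) t j := by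
    rw [qPoch_inv ht, hp]
    congr 1
    push_cast
    simp only [zpow_sub₀ ht, zpow_add₀ ht, zpow_natCast, inv_pow, two_mul, zpow_one]
    field_simp
  rw [show r / p = a₁⁻¹ * b₂⁻¹ by rw [hr, hp]; field_simp, hpinv] at hconst
  rw [hsum, qPoch_inv_pow ht (a₁⁻¹ * b₂⁻¹)]
  have := hpN j
  simp only [div_eq_mul_inv, mul_inv]
  generalize (qPoch (b₁⁻¹ * b₂ * t ^ (-(((j + M : ℕ) : ℤ) - 2 * (j : ℕ) - 1))) t M)⁻¹ = Z
  generalize qPoch (b₁ * b₂⁻¹ * t ^ (((j + M : ℕ) : ℤ) - 2 * (j : ℕ) + 1)) t j = Y at *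
  generalize qPoch (a₂⁻¹ * b₁⁻¹ * t⁻¹ ^ (M - 1)) t M = V
  generalize qPoch (a₁⁻¹ * b₂⁻¹) t⁻¹ j = B at *
  field_simp
  linear_combination (qPoch (x * b₂ * t ^ j) t M * qPoch w t j * V * Z) * hconst

/-- `L′_R` sends these multiples to `(x b₁ t^{n-j})_j (x/a₂)_{n-j}`. -/
theorem vecMul_matLR' (ha₂ : a₂ ≠ 0) (hb₁ : b₁ ≠ 0) (hb₂ : b₂ ≠ 0) (ht : t ≠ 0)
    (hroot : ∀ m : ℕ, m ≠ 0 → t ^ m ≠ 1) (hC : ∀ m : ℤ, t ^ m * (b₁⁻¹ * b₂) ≠ 1)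
    {x : ℂ} (hx : x ≠ 0) :
    Matrix.vecMul (fun j : Fin (n + 1) =>
        qPoch (a₂⁻¹ * b₁⁻¹ * (t⁻¹) ^ (n - (j : ℕ) - 1)) t (n - (j : ℕ)) /
        qPoch (b₁⁻¹ * b₂ * t ^ (-((n : ℤ) - 2 * (j : ℕ) - 1))) t (n - (j : ℕ)) *
        (qPoch (x * b₁ * t ^ (n - (j : ℕ))) t (j : ℕ) *
          qPoch (x * b₂ * t ^ (j : ℕ)) t (n - j))) (matLR' n a₁ a₂ b₁ b₂ t) =
      fun j : Fin (n + 1) => qPoch (x * b₁ * t ^ (n - (j : ℕ))) t (j : ℕ) *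
        qPoch (x / a₂) t (n - j) := by
  funext j
  simp only [Matrix.vecMul, dotProduct, matLR', Matrix.of_apply, mul_ite, mul_zero]
  rw [sum_fin_ite_ge n j fun i => qPoch (a₂⁻¹ * b₁⁻¹ * (t⁻¹) ^ (n - i - 1)) t (n - i) /
        qPoch (b₁⁻¹ * b₂ * t ^ (-((n : ℤ) - 2 * (i : ℕ) - 1))) t (n - i) *
        (qPoch (x * b₁ * t ^ (n - i)) t i * qPoch (x * b₂ * t ^ i) t (n - i)) *
      (qBinom t (n - (j : ℕ)) (n - i) *
        (qPoch (a₂⁻¹ * b₂⁻¹ * (t⁻¹) ^ (i - 1)) t (i - (j : ℕ)) /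
          qPoch (b₁ * b₂⁻¹ * t ^ ((n : ℤ) - 2 * (i : ℕ) + 1)) t (i - (j : ℕ))))]
  obtain ⟨j, hj⟩ := j
  obtain ⟨N, rfl⟩ : ∃ N, n = j + N := ⟨n - j, by omega⟩
  simp only [Nat.add_sub_cancel_left]
  set u : ℂ := x * b₁ * t ^ ((N : ℤ) - 1) with hu
  set v : ℂ := x * b₂ * t ^ ((j : ℤ) + N - 1) with hv
  set ω : ℂ := x / a₂ * t ^ ((N : ℤ) - 1) with hω
  have hu0 : u ≠ 0 := mul_ne_zero (mul_ne_zero hx hb₁) (zpow_ne_zero _ ht)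
  have hv0 : v ≠ 0 := mul_ne_zero (mul_ne_zero hx hb₂) (zpow_ne_zero _ ht)
  have huv : u / v = b₁ * b₂⁻¹ * t ^ (-(j : ℤ)) := by
    rw [hu, hv]
    simp only [zpow_sub₀ ht, zpow_add₀ ht, zpow_neg, zpow_natCast, zpow_one]
    field_simp
  have hvu : v / u = b₁⁻¹ * b₂ * t ^ (j : ℤ) := by
    rw [← inv_div, huv, zpow_neg]
    simp only [mul_inv, inv_inv]
  have main := sum_qBinom_parallel (inv_ne_zero ht) (inv_pow_ne_one hroot) hu0 hv0
    (fun m => by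
      rw [← inv_div, hvu, inv_zpow, ← mul_inv, Ne, inv_eq_one, mul_comm (b₁⁻¹ * b₂), ← mul_assoc,
        ← zpow_add₀ ht]
      exact hC _) ω N
  have hωN : qPoch ω t⁻¹ N = qPoch (x / a₂) t N := by
    rw [qPoch_inv ht, hω, mul_assoc, ← zpow_add₀ ht]
    simp
  rw [← hωN, ← main, Finset.mul_sum]
  refine Finset.sum_congr rfl fun m hm => ?_
  obtain ⟨k, rfl⟩ : ∃ k, N = m + k :=
    ⟨N - m, by have := Finset.mem_range.1 hm; omega⟩
  have e1 : qPoch (a₂⁻¹ * b₂⁻¹ * (t⁻¹) ^ (j + m - 1)) t m = qPoch (ω / v) t⁻¹ m := by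
    rw [← qPoch_inv_pow ht, show ω / v = a₂⁻¹ * b₂⁻¹ * t⁻¹ ^ j by
      rw [hω, hv]
      simp only [zpow_sub₀ ht, zpow_add₀ ht, zpow_natCast, zpow_one, inv_pow]
      field_simp]
    cases m with
    | zero => simp only [qPoch_zero]
    | succ m =>
      rw [mul_assoc (a₂⁻¹ * b₂⁻¹), ← pow_add]
      congr 3
  have e2 : qPoch (a₂⁻¹ * b₁⁻¹ * (t⁻¹) ^ (k - 1)) t k = qPoch (ω / u) t⁻¹ k := by
    rw [qPoch_inv_pow ht, show ω / u = a₂⁻¹ * b₁⁻¹ by rw [hω, hu]; field_simp]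
  have e3 : qPoch (u / v * t⁻¹ ^ ((m : ℤ) - ((m + k : ℕ) : ℤ))) t⁻¹ m =
      qPoch (b₁ * b₂⁻¹ * t ^ (((j + (m + k) : ℕ) : ℤ) - 2 * ((j + m : ℕ) : ℤ) + 1)) t m := by
    rw [qPoch_inv ht, huv]
    congr 1
    push_cast
    simp only [inv_zpow, zpow_sub₀ ht, zpow_add₀ ht, zpow_neg, zpow_natCast, zpow_one, two_mul]
    field_simp
  have e4 : qPoch (v / u * t⁻¹ ^ (-(m : ℤ))) t⁻¹ k =
      qPoch (b₁⁻¹ * b₂ * t ^ (-(((j + (m + k) : ℕ) : ℤ) - 2 * ((j + m : ℕ) : ℤ) - 1))) t k := by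
    rw [qPoch_inv ht, hvu]
    congr 1
    push_cast
    simp only [inv_pow, zpow_sub₀ ht, zpow_add₀ ht, zpow_neg, zpow_natCast, zpow_one, two_mul]
    field_simp
  have e5 : qPoch u t⁻¹ m = qPoch (x * b₁ * t ^ k) t m := by
    rw [qPoch_inv ht, hu]
    congr 1
    push_cast
    simp only [zpow_sub₀ ht, zpow_add₀ ht, zpow_natCast, zpow_one]
    field_simp
  have e6 : qPoch v t⁻¹ k = qPoch (x * b₂ * t ^ (j + m)) t k := by
    rw [qPoch_inv ht, hv]
    congr 1
    push_cast
    simp only [zpow_sub₀ ht, zpow_add₀ ht, zpow_natCast, zpow_one, pow_add]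
    field_simp
  have e7 : qBinom t (m + k) k = qBinom t (m + k) m := by
    rw [← qBinom_symm t (Nat.le_add_right m k), Nat.add_sub_cancel_left]
  rw [show j + (m + k) - (j + m) = k by omega, show m + k - m = k by omega, inv_inv, e1, e2, e3,
    e4, e5, e6, e7, add_comm j m, qPoch_add (x * b₁ * t ^ k),
    show t ^ m * (x * b₁ * t ^ k) = x * b₁ * t ^ (m + k) by ring]
  simp only [div_eq_mul_inv, mul_inv]
  ring

/-- The values of `(x/a₁)_i (x b₂ t^i)_{n-i}` at `x = a₁ t^{-k}` form a triangular invertible matrix. -/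
theorem det_basis_ne_zero (ha₁ : a₁ ≠ 0) (ht : t ≠ 0)
    (hroot : ∀ m : ℤ, m ≠ 0 → t ^ m ≠ 1) (hB : ∀ m : ℤ, t ^ m * (a₁ * b₂) ≠ 1) :
    (Matrix.of fun k i : Fin (n + 1) => qPoch (a₁ * t⁻¹ ^ (k : ℕ) / a₁) t (i : ℕ) *
      qPoch (a₁ * t⁻¹ ^ (k : ℕ) * b₂ * t ^ (i : ℕ)) t (n - i)).det ≠ 0 := by
  rw [Matrix.det_of_isLowerTriangular]
  · refine Finset.prod_ne_zero_iff.2 fun i _ => mul_ne_zero ?_ ?_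
    · refine qPoch_ne_zero fun l hl => ?_
      rw [mul_div_cancel_left₀ _ ha₁, inv_pow, ← zpow_natCast, ← zpow_natCast, ← zpow_neg,
        ← zpow_add₀ ht]
      exact hroot _ (by omega)
    · refine qPoch_ne_zero fun l _ => ?_
      rw [inv_pow, show a₁ * (t ^ (i : ℕ))⁻¹ * b₂ * t ^ (i : ℕ) = a₁ * b₂ by field_simp,
        ← zpow_natCast]
      exact hB _
  · intro k i hki
    have hki : (k : ℕ) < i := hki
    rw [Matrix.of_apply, mul_div_cancel_left₀ _ ha₁, qPoch,
      Finset.prod_eq_zero (Finset.mem_range.2 hki), zero_mul]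
    rw [inv_pow, mul_inv_cancel₀ (pow_ne_zero _ ht), sub_self]

end Transitions

/-- The two Gauss decompositions of the R-matrix agree: L_R D_R U_R = U′_R D′_R L′_R,
for generic parameters. -/
theorem R_matrix_gauss_decompositions_agree (n : ℕ) (a₁ a₂ b₁ b₂ t : ℂ)
    (ha₁ : a₁ ≠ 0) (ha₂ : a₂ ≠ 0) (hb₁ : b₁ ≠ 0) (hb₂ : b₂ ≠ 0) (ht : t ≠ 0)
    (hroot : ∀ m : ℤ, m ≠ 0 → t ^ m ≠ 1)
    (hA : ∀ m : ℤ, t ^ m * (a₁⁻¹ * a₂) ≠ 1)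
    (hB : ∀ m : ℤ, t ^ m * (a₁ * b₂) ≠ 1)
    (hC : ∀ m : ℤ, t ^ m * (b₁⁻¹ * b₂) ≠ 1) :
    matLR n a₁ a₂ b₁ b₂ t * matDR n a₁ a₂ b₁ b₂ t * matUR n a₁ a₂ b₁ b₂ t =
      matUR' n a₁ a₂ b₁ b₂ t * matDR' n a₁ a₂ b₁ b₂ t * matLR' n a₁ a₂ b₁ b₂ t := by
  have hroot' : ∀ m : ℕ, m ≠ 0 → t ^ m ≠ 1 := fun m hm => by
    rw [← zpow_natCast]
    exact hroot _ (Int.natCast_ne_zero.2 hm)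
  have hunit := (Matrix.isUnit_iff_isUnit_det _).2
    (isUnit_iff_ne_zero.2 (det_basis_ne_zero (n := n) ha₁ ht hroot hB))
  refine hunit.mul_left_cancel ?_
  funext k
  have hx : a₁ * t⁻¹ ^ (k : ℕ) ≠ 0 := mul_ne_zero ha₁ (pow_ne_zero _ (inv_ne_zero ht))
  rw [Matrix.mul_apply_eq_vecMul, Matrix.mul_apply_eq_vecMul]
  simp only [← Matrix.vecMul_vecMul]
  have h₁ := vecMul_matLR_matDR (n := n) (b₁ := b₁) ha₁ ha₂ ht hroot' hA hB (a₁ * t⁻¹ ^ (k : ℕ))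
  have h₂ := vecMul_matUR (n := n) (b₁ := b₁) (b₂ := b₂) ha₁ ha₂ ht hroot' hA hx
  have h₃ := vecMul_matUR'_matDR' (n := n) (a₂ := a₂) ha₁ hb₁ hb₂ ht hroot' hB hC
    (a₁ * t⁻¹ ^ (k : ℕ))
  have h₄ := vecMul_matLR' (n := n) (a₁ := a₁) ha₂ hb₁ hb₂ ht hroot' hC hx
  rw [← h₁] at h₂
  rw [← h₃] at h₄
  exact h₂.trans h₄.symm
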